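/- Let M = p_i^2 p_j^{n_j} p_k^{n_k} with p_i, p_j, p_k distinct primes, and let A ⊕ B = ℤ_M with |A| = p_i p_j p_k. Assume that no divisor m of M with D(M) | m and m ≠ M belongs to Div(B). Suppose x ∈ ℤ_M ∖ A and there exist a, a_j, a_k ∈ A with (a−a_j, M) = (a_k−x, M) = M/p_j and (a−a_k, M) = (a_j−x, M) = M/p_k. Then for every b ∈ B the set A_{x,b} = {a′ ∈ A : (x−a′, M) = (b−b′, M) for some b′ ∈ B} is contained in the line ℓ_i(x); consequently the saturating set A_x = {a′ ∈ A : (x−a′, M) ∈ Div(B)} is contained in ℓ_i(x). -/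

import Mathlib

open Polynomial

/-- The mask polynomial `A(X) = Σ_{a ∈ A} X^a` of a finite subset of `ZMod M`,
using the representatives in `{0, …, M-1}`. -/
noncomputable def maskPoly (M : ℕ) (A : Finset (ZMod M)) : Polynomial ℤ :=
  ∑ a ∈ A, X ^ a.val

/-- `Φ_s | A` : the `s`-th cyclotomic polynomial divides the mask polynomial of `A` in `ℤ[X]`. -/
def cycDvd (M s : ℕ) (A : Finset (ZMod M)) : Prop :=
  cyclotomic s ℤ ∣ maskPoly M A

/-- `A ⊕ B = ℤ_M` : every element of `ℤ_M` has a unique representation `a + b`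
with `a ∈ A` and `b ∈ B`. -/
def IsTiling (M : ℕ) (A B : Set (ZMod M)) : Prop :=
  ∀ z : ZMod M, ∃! ab : ZMod M × ZMod M, ab.1 ∈ A ∧ ab.2 ∈ B ∧ ab.1 + ab.2 = z

/-- The Coven–Meyerowitz property (T2): whenever `s_1, …, s_m` are prime powers dividing `M`,
powers of pairwise distinct primes, with `Φ_{s_t} | A` for each `t`, then `Φ_{s_1 ⋯ s_m} | A`. -/
def SatisfiesT2 (M : ℕ) (A : Finset (ZMod M)) : Prop :=
  ∀ (P : Finset ℕ) (e : ℕ → ℕ), P.Nonempty →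
    (∀ p ∈ P, p.Prime ∧ 1 ≤ e p ∧ p ^ e p ∣ M ∧ cycDvd M (p ^ e p) A) →
    cycDvd M (∏ p ∈ P, p ^ e p) A

/-- The `D`-grid through `x` in `ZMod M` : `Λ(x, D) = {y : D ∣ y - x}`. -/
def gridSet (M : ℕ) (x : ZMod M) (D : ℕ) : Set (ZMod M) :=
  {y : ZMod M | (D : ZMod M) ∣ (y - x)}

/-- `S` is fibered in the `p` direction on scale `M`: every element of `S` has its whole
fiber `Λ(s, M/p)` contained in `S`. -/
def Fibered (M p : ℕ) (S : Set (ZMod M)) : Prop :=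
  ∀ s ∈ S, gridSet M s (M / p) ⊆ S

/-- `Div_N(S)` : the set of values `(s - s', N) = gcd(s - s', N)` for `s, s' ∈ S`. -/
def DivSet (M N : ℕ) (S : Set (ZMod M)) : Set ℕ :=
  {m : ℕ | ∃ s ∈ S, ∃ s' ∈ S, Nat.gcd (s - s').val N = m}


theorem tile_card {M : ℕ} [NeZero M] {A B : Finset (ZMod M)}
    (h : ∀ z : ZMod M, ∃! ab : ZMod M × ZMod M, ab.1 ∈ A ∧ ab.2 ∈ B ∧ ab.1 + ab.2 = z) :
    A.card * B.card = M := by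
  rw [← Finset.card_product]
  conv_rhs => rw [← ZMod.card M, ← Finset.card_univ]
  apply Finset.card_bij (fun ab _ => ab.1 + ab.2)
  · simp
  · intro a ha b hb hab
    rw [Finset.mem_product] at ha hb
    exact (h (a.1 + a.2)).unique ⟨ha.1, ha.2, rfl⟩ ⟨hb.1, hb.2, hab.symm⟩
  · intro z _
    obtain ⟨ab, h1, -⟩ := h z
    exact ⟨ab, Finset.mem_product.2 ⟨h1.1, h1.2.1⟩, h1.2.2⟩

theorem tile_surj {M : ℕ} [NeZero M] {A B : Finset (ZMod M)}
    (h : ∀ z : ZMod M, ∃! ab : ZMod M × ZMod M, ab.1 ∈ A ∧ ab.2 ∈ B ∧ ab.1 + ab.2 = z)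
    (u : ZMod M) (hu : IsUnit u) (z : ZMod M) : ∃ a ∈ A, ∃ b ∈ B, a + u * b = z := by
  obtain ⟨p, hpM, hp, rfl⟩ := Nat.forall_exists_prime_gt_and_eq_mod hu M
  have : Fact p.Prime := ⟨hp⟩
  have : CharP (AddMonoidAlgebra (ZMod p) (ZMod M)) p := charP_of_injective_algebraMap' (ZMod p) p
  by_contra! hne
  let e : ZMod M → AddMonoidAlgebra (ZMod p) (ZMod M) := fun g => AddMonoidAlgebra.single g 1
  have he : ∀ g g', e g * e g' = e (g + g') := fun g g' => by
    simp [e, AddMonoidAlgebra.single_mul_single]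
  have h1 : (∑ a ∈ A, e a) * (∑ b ∈ B, e b) = ∑ g, e g := by
    rw [Finset.sum_mul_sum, ← Finset.sum_product']
    simp only [he]
    apply Finset.sum_bij (fun ab _ => ab.1 + ab.2)
    · simp
    · intro a ha b hb hab
      rw [Finset.mem_product] at ha hb
      exact (h (a.1 + a.2)).unique ⟨ha.1, ha.2, rfl⟩ ⟨hb.1, hb.2, hab.symm⟩
    · intro z _
      obtain ⟨ab, h1, -⟩ := h z
      exact ⟨ab, Finset.mem_product.2 ⟨h1.1, h1.2.1⟩, h1.2.2⟩
    · simp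
  have h2 : (∑ g, e g) * (∑ b ∈ B, e b) = B.card • ∑ g, e g := by
    rw [Finset.mul_sum]
    have : ∀ b ∈ B, (∑ g, e g) * e b = ∑ g, e g := by
      intro b _
      rw [Finset.sum_mul]
      simp only [he]
      exact Fintype.sum_equiv (Equiv.addRight b) _ _ (fun _ => rfl)
    rw [Finset.sum_congr rfl this, Finset.sum_const]
  have h3 : ∀ n : ℕ, (∑ g, e g) * (∑ b ∈ B, e b) ^ n = (B.card ^ n) • ∑ g, e g := by
    intro n
    induction n with
    | zero => simp
    | succ n ih => rw [pow_succ, ← mul_assoc, ih, smul_mul_assoc, h2, smul_smul, pow_succ]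
  have h4 : (∑ a ∈ A, e a) * (∑ b ∈ B, e b) ^ p = (B.card ^ (p - 1)) • ∑ g, e g := by
    rw [← h3, ← h1, mul_assoc, ← pow_succ', Nat.sub_add_cancel hp.one_le]
  rw [sum_pow_char p, Finset.sum_mul_sum, ← Finset.sum_product'] at h4
  have h5 := congrArg (fun f => f.coeff z) h4
  simp only [e, AddMonoidAlgebra.single_pow, one_pow, AddMonoidAlgebra.single_mul_single, mul_one] at h5
  rw [AddMonoidAlgebra.coeff_sum, AddMonoidAlgebra.coeff_smul, AddMonoidAlgebra.coeff_sum] at h5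
  simp only [AddMonoidAlgebra.coeff_single, Finsupp.finsetSum_apply, Finsupp.smul_apply,
    Finsupp.single_apply] at h5
  rw [Finset.sum_eq_zero] at h5
  · simp only [Finset.sum_ite_eq', Finset.mem_univ, if_true, nsmul_eq_mul, mul_one] at h5
    have h6 : ((B.card : ℕ) : ZMod p) = 0 := by
      push_cast at h5
      exact eq_zero_of_pow_eq_zero h5.symm
    rw [ZMod.natCast_eq_zero_iff] at h6
    have h7 := h6.trans (Dvd.intro_left _ (tile_card h))
    have := Nat.le_of_dvd (NeZero.pos M) h7
    omega
  · intro ab hab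
    rw [Finset.mem_product] at hab
    rw [if_neg]
    have := hne _ hab.1 _ hab.2
    simpa using this

theorem tile_inj {M : ℕ} [NeZero M] {A B : Finset (ZMod M)}
    (h : ∀ z : ZMod M, ∃! ab : ZMod M × ZMod M, ab.1 ∈ A ∧ ab.2 ∈ B ∧ ab.1 + ab.2 = z)
    (u : ZMod M) (hu : IsUnit u) {a a' b b' : ZMod M} (ha : a ∈ A) (ha' : a' ∈ A)
    (hb : b ∈ B) (hb' : b' ∈ B) (hab : a + u * b = a' + u * b') : a = a' := by
  have := Finset.inj_on_of_surj_on_of_card_le (s := A ×ˢ B) (t := Finset.univ)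
    (fun ab _ => ab.1 + u * ab.2) (by simp)
    (by
      intro z _
      obtain ⟨a, ha, b, hb, hz⟩ := tile_surj h u hu z
      exact ⟨(a, b), Finset.mem_product.2 ⟨ha, hb⟩, hz⟩)
    (by rw [Finset.card_product, tile_card h, Finset.card_univ, ZMod.card])
    (a₁ := (a, b)) (a₂ := (a', b')) (Finset.mem_product.2 ⟨ha, hb⟩)
      (Finset.mem_product.2 ⟨ha', hb'⟩) hab
  exact congrArg Prod.fst this

theorem natCast_dvd_iff' {M : ℕ} [NeZero M] {d : ℕ} (hd : d ∣ M) (y : ZMod M) :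
    (d : ZMod M) ∣ y ↔ d ∣ y.val := by
  constructor
  · rintro ⟨c, rfl⟩
    rw [ZMod.val_mul]
    rw [Nat.dvd_mod_iff hd]
    apply Dvd.dvd.mul_right
    rw [ZMod.val_natCast, Nat.dvd_mod_iff hd]
  · rintro ⟨c, hc⟩
    refine ⟨(c : ZMod M), ?_⟩
    rw [← Nat.cast_mul, ← hc, ZMod.natCast_zmod_val]

theorem gcd_unit_mul {M : ℕ} [NeZero M] (u : ZMod M) (hu : IsUnit u) (y : ZMod M) :
    Nat.gcd (u * y).val M = Nat.gcd y.val M := by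
  rw [ZMod.val_mul, Nat.mod_modEq _ _ |>.gcd_eq]
  obtain ⟨v, rfl⟩ := hu
  exact Nat.Coprime.gcd_mul_left_cancel _ (ZMod.val_coe_unit_coprime v)

theorem exists_unit_of_gcd_eq {M : ℕ} [NeZero M] {y z : ZMod M}
    (h : Nat.gcd y.val M = Nat.gcd z.val M) : ∃ u : ZMod M, IsUnit u ∧ y = u * z := by
  obtain ⟨d, hd, u, hu, rfl⟩ := ZMod.eq_unit_mul_divisor y
  obtain ⟨d', hd', u', hu', rfl⟩ := ZMod.eq_unit_mul_divisor z
  rw [gcd_unit_mul _ hu, gcd_unit_mul _ hu', ZMod.val_natCast, ZMod.val_natCast,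
    (Nat.mod_modEq _ _).gcd_eq, (Nat.mod_modEq _ _).gcd_eq, Nat.gcd_eq_left hd,
    Nat.gcd_eq_left hd'] at h
  subst h
  obtain ⟨v, rfl⟩ := hu'
  refine ⟨u * ↑v⁻¹, hu.mul (Units.isUnit _), ?_⟩
  rw [mul_assoc, Units.inv_mul_cancel_left]

/-- The theorem of Sands. -/
theorem sands {M : ℕ} [NeZero M] {A B : Finset (ZMod M)}
    (h : ∀ z : ZMod M, ∃! ab : ZMod M × ZMod M, ab.1 ∈ A ∧ ab.2 ∈ B ∧ ab.1 + ab.2 = z)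
    {a a' b b' : ZMod M} (ha : a ∈ A) (ha' : a' ∈ A)
    (hb : b ∈ B) (hb' : b' ∈ B)
    (hab : Nat.gcd (a - a').val M = Nat.gcd (b - b').val M) : a = a' := by
  obtain ⟨u, hu, e⟩ := exists_unit_of_gcd_eq hab
  refine tile_inj h u hu ha ha' hb' hb ?_
  linear_combination e

theorem dvd_iff_gcd {M : ℕ} [NeZero M] {d : ℕ} (hd : d ∣ M) (y : ZMod M) :
    (d : ZMod M) ∣ y ↔ d ∣ Nat.gcd y.val M := by
  rw [natCast_dvd_iff' hd, Nat.dvd_gcd_iff]; simp [hd]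

theorem gcd_congr {M : ℕ} [NeZero M] {t : ℕ} (ht : t ∣ M) {y z : ZMod M}
    (h : (t : ZMod M) ∣ y - z) : Nat.gcd y.val t = Nat.gcd z.val t := by
  apply Nat.ModEq.gcd_eq
  rw [← ZMod.natCast_eq_natCast_iff]
  obtain ⟨c, hc⟩ := h
  have := congrArg (ZMod.castHom ht (ZMod t)) hc
  simp only [map_sub, map_mul, map_natCast, CharP.cast_eq_zero, zero_mul, sub_eq_zero] at this
  simpa [ZMod.natCast_val] using this

theorem mul_dvd_of_coprime {M : ℕ} [NeZero M] {s t : ℕ} (hst : s * t ∣ M) (hc : s.Coprime t)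
    {y : ZMod M} (h1 : (s : ZMod M) ∣ y) (h2 : (t : ZMod M) ∣ y) : ((s * t : ℕ) : ZMod M) ∣ y := by
  rw [natCast_dvd_iff' hst]
  rw [natCast_dvd_iff' ((Dvd.intro _ rfl).trans hst)] at h1
  rw [natCast_dvd_iff' ((Dvd.intro_left _ rfl).trans hst)] at h2
  exact hc.mul_dvd_of_dvd_of_dvd h1 h2

theorem castHom_eq_zero_iff {M : ℕ} [NeZero M] {d : ℕ} (hd : d ∣ M) (y : ZMod M) :
    ZMod.castHom hd (ZMod d) y = 0 ↔ (d : ZMod M) ∣ y := by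
  rw [natCast_dvd_iff' hd, ← ZMod.natCast_eq_zero_iff, ZMod.natCast_val]
  rfl

theorem natCast_dvd_intCast {M : ℕ} [NeZero M] {d : ℕ} (hd : d ∣ M) (t : ℤ) :
    (d : ZMod M) ∣ (t : ZMod M) ↔ (d : ℤ) ∣ t := by
  rw [← castHom_eq_zero_iff hd, map_intCast, ZMod.intCast_zmod_eq_zero_iff_dvd _ _ |>.symm]

theorem quot_iff {M : ℕ} [NeZero M] {r n : ℕ} (hr : 0 < r) (hd : r ^ (n + 1) ∣ M) {y z : ZMod M}
    (hy : ((r ^ n : ℕ) : ZMod M) ∣ y) (hz : ((r ^ n : ℕ) : ZMod M) ∣ z) (k : ℕ) :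
    ((y.val / r ^ n : ℕ) : ZMod r) = k * ((z.val / r ^ n : ℕ) : ZMod r) ↔
      ((r ^ (n + 1) : ℕ) : ZMod M) ∣ y - k * z := by
  have hd' : r ^ n ∣ M := (pow_dvd_pow r (Nat.le_succ n)).trans hd
  rw [natCast_dvd_iff' hd'] at hy hz
  obtain ⟨c, hc⟩ := hy
  obtain ⟨c', hc'⟩ := hz
  have hpos : 0 < r ^ n := pow_pos hr n
  rw [hc, hc', Nat.mul_div_cancel_left _ hpos, Nat.mul_div_cancel_left _ hpos]
  have e : y - k * z = (((r : ℤ) ^ n * ((c : ℤ) - k * c') : ℤ) : ZMod M) := by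
    rw [← ZMod.natCast_zmod_val y, ← ZMod.natCast_zmod_val z, hc, hc']
    push_cast
    ring
  rw [e, natCast_dvd_intCast hd, pow_succ]
  push_cast
  rw [mul_dvd_mul_iff_left (by positivity), ← ZMod.intCast_zmod_eq_zero_iff_dvd]
  push_cast
  rw [sub_eq_zero]

theorem gcd_prime_pow_succ {r n y : ℕ} (hr : r.Prime) (h : ¬ r ^ (n + 1) ∣ y) :
    Nat.gcd y (r ^ (n + 1)) = Nat.gcd y (r ^ n) := by
  obtain ⟨i, hi, e⟩ := (Nat.dvd_prime_pow hr).1 (Nat.gcd_dvd_right y (r ^ (n + 1)))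
  have hin : i ≤ n := by
    by_contra hcon
    have : i = n + 1 := by omega
    subst this
    exact h (e ▸ Nat.gcd_dvd_left _ _)
  apply Nat.dvd_antisymm
  · exact Nat.dvd_gcd (Nat.gcd_dvd_left _ _) (e ▸ pow_dvd_pow r hin)
  · exact Nat.gcd_dvd_gcd_of_dvd_right _ (pow_dvd_pow r (Nat.le_succ n))

theorem gcd_split {p q r m n M : ℕ} (hM : M = p ^ 2 * q ^ (m + 1) * r ^ (n + 1)) (hp : p.Prime) (hq : q.Prime) (hr : r.Prime)
    (hpq : p ≠ q) (hpr : p ≠ r) (hqr : q ≠ r) (y : ℕ) :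
    Nat.gcd y M =
      Nat.gcd y (p ^ 2) * Nat.gcd y (q ^ (m + 1)) * Nat.gcd y (r ^ (n + 1)) := by
  have c1 := (Nat.coprime_primes hp hq).2 hpq
  have c2 := (Nat.coprime_primes hp hr).2 hpr
  have c3 := (Nat.coprime_primes hq hr).2 hqr
  rw [hM, Nat.Coprime.gcd_mul _ (Nat.Coprime.mul_left (c2.pow _ _) (c3.pow _ _)),
    Nat.Coprime.gcd_mul _ (c1.pow _ _)]

/-- The `Bispan` lemma, for a point of `A` at distance `M / r` from `x`. -/
theorem bispan {p q r m n M : ℕ} [NeZero M] (hp : p.Prime) (hq : q.Prime) (hr : r.Prime)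
    (hpq : p ≠ q) (hpr : p ≠ r) (hqr : q ≠ r) (hM : M = p ^ 2 * q ^ (m + 1) * r ^ (n + 1))
    {A B : Finset (ZMod M)}
    (h : ∀ z : ZMod M, ∃! ab : ZMod M × ZMod M, ab.1 ∈ A ∧ ab.2 ∈ B ∧ ab.1 + ab.2 = z)
    {x c : ZMod M} (hc : c ∈ A) (hpx : ((p ^ 2 : ℕ) : ZMod M) ∣ c - x)
    (hqx : ((q ^ (m + 1) : ℕ) : ZMod M) ∣ c - x) (hrx : ((r ^ n : ℕ) : ZMod M) ∣ c - x)
    {a' b b' : ZMod M} (ha' : a' ∈ A) (hb : b ∈ B) (hb' : b' ∈ B)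
    (hab : Nat.gcd (x - a').val M = Nat.gcd (b - b').val M) :
    ((r ^ (n + 1) : ℕ) : ZMod M) ∣ x - a' ∨ ((r ^ (n + 1) : ℕ) : ZMod M) ∣ c - a' := by
  by_contra! hcon
  obtain ⟨n1, n2⟩ := hcon
  have dp : p ^ 2 ∣ M := ⟨q ^ (m + 1) * r ^ (n + 1), by rw [hM]; ring⟩
  have dq : q ^ (m + 1) ∣ M := ⟨p ^ 2 * r ^ (n + 1), by rw [hM]; ring⟩
  have dr : r ^ (n + 1) ∣ M := ⟨p ^ 2 * q ^ (m + 1), by rw [hM]; ring⟩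
  have dr' : r ^ n ∣ M := (pow_dvd_pow r (Nat.le_succ n)).trans dr
  have e0 : (c - a') - (x - a') = c - x := by ring
  have e1 := gcd_congr dp (y := c - a') (z := x - a') (by rw [e0]; exact hpx)
  have e2 := gcd_congr dq (y := c - a') (z := x - a') (by rw [e0]; exact hqx)
  have e3 := gcd_congr dr' (y := c - a') (z := x - a') (by rw [e0]; exact hrx)
  have key : Nat.gcd (c - a').val M = Nat.gcd (x - a').val M := by
    rw [gcd_split hM hp hq hr hpq hpr hqr, gcd_split hM hp hq hr hpq hpr hqr, e1, e2]
    rw [natCast_dvd_iff' dr] at n1 n2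
    rw [gcd_prime_pow_succ hr n1, gcd_prime_pow_succ hr n2, e3]
  have := sands h hc ha' hb hb' (key.trans hab)
  subst this
  simp at n2

theorem card_G {p E M : ℕ} [NeZero M] (hc : p.Coprime E) (hD : p * E ∣ M) {B : Finset (ZMod M)}
    (hB : B.card = p * E)
    (hinj : ∀ b ∈ B, ∀ b' ∈ B, ((p * E : ℕ) : ZMod M) ∣ b - b' → b = b') (b : ZMod M)
    (G : Finset (ZMod M)) (hG : ∀ g, g ∈ G ↔ g ∈ B ∧ (E : ZMod M) ∣ b - g) : G.card = p := by
  have dp : p ∣ M := (Dvd.intro _ rfl).trans hD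
  have dE : E ∣ M := (Dvd.intro_left _ rfl).trans hD
  have hM0 : 0 < M := NeZero.pos M
  have : NeZero p := ⟨fun h0 => by simp [h0] at dp; omega⟩
  have : NeZero (p * E) := ⟨fun h0 => by simp only [h0, zero_dvd_iff] at hD; omega⟩
  conv_rhs => rw [← ZMod.card p, ← Finset.card_univ]
  apply Finset.card_bij (fun g _ => ZMod.castHom dp (ZMod p) g)
  · simp
  · intro g hg g' hg' hgg
    rw [hG] at hg hg'
    rw [← sub_eq_zero, ← map_sub, castHom_eq_zero_iff] at hgg
    refine hinj g hg.1 g' hg'.1 (mul_dvd_of_coprime hD hc hgg ?_)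
    have := dvd_sub hg'.2 hg.2
    rwa [sub_sub_sub_cancel_left] at this
  · intro t _
    have hs := Finset.surj_on_of_inj_on_of_card_le (s := B) (t := Finset.univ)
      (fun g _ => ZMod.castHom hD (ZMod (p * E)) g) (by simp)
      (by
        intro g g' hg hg' hgg
        rw [← sub_eq_zero, ← map_sub, castHom_eq_zero_iff] at hgg
        exact hinj g hg g' hg' hgg)
      (by rw [Finset.card_univ, ZMod.card, hB])
    obtain ⟨w, hw1, hw2⟩ := Nat.chineseRemainder hc t.val b.val
    obtain ⟨g, hg, e⟩ := hs (w : ZMod (p * E)) (Finset.mem_univ _)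
    have e' : ((p * E : ℕ) : ZMod M) ∣ (w : ZMod M) - g := by
      rw [← castHom_eq_zero_iff hD, map_sub, ← e, map_natCast, sub_self]
    refine ⟨g, (hG g).2 ⟨hg, ?_⟩, ?_⟩
    · have e1 : (E : ZMod M) ∣ (w : ZMod M) - g :=
        (by push_cast; exact Dvd.intro_left _ rfl : (E : ZMod M) ∣ ((p * E : ℕ) : ZMod M)).trans e'
      have e2 : (E : ZMod M) ∣ b - (w : ZMod M) := by
        rw [← castHom_eq_zero_iff dE, map_sub, map_natCast, sub_eq_zero]
        rw [← ZMod.natCast_eq_natCast_iff] at hw2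
        rw [hw2, ZMod.natCast_val]
        rfl
      have := dvd_add e2 e1
      rwa [sub_add_sub_cancel] at this
    · have e1 : (p : ZMod M) ∣ (w : ZMod M) - g :=
        (by push_cast; exact Dvd.intro _ rfl : (p : ZMod M) ∣ ((p * E : ℕ) : ZMod M)).trans e'
      rw [← castHom_eq_zero_iff dp, map_sub, map_natCast, sub_eq_zero] at e1
      rw [← e1]
      rw [← ZMod.natCast_eq_natCast_iff] at hw1
      rw [hw1, ZMod.natCast_zmod_val]

theorem key_lemma {p q r m n M : ℕ} [NeZero M] (hp : p.Prime) (hq : q.Prime) (hr : r.Prime)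
    (hpq : p ≠ q) (hpr : p ≠ r) (hqr : q ≠ r) (hM : M = p ^ 2 * q ^ (m + 1) * r ^ (n + 1))
    {A B : Finset (ZMod M)}
    (h : ∀ z : ZMod M, ∃! ab : ZMod M × ZMod M, ab.1 ∈ A ∧ ab.2 ∈ B ∧ ab.1 + ab.2 = z)
    (hcard : A.card = p * q * r)
    (hdiv : ∀ t : ℕ, (p * q ^ m * r ^ n) ∣ t → t ∣ M → t ≠ M →
      ∀ b ∈ B, ∀ b' ∈ B, Nat.gcd (b - b').val M ≠ t)
    {x : ZMod M} (hx : x ∉ A) {a aj ak : ZMod M} (ha : a ∈ A) (haj : aj ∈ A) (hak : ak ∈ A)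
    (h1 : Nat.gcd (a - aj).val M = M / q)
    (h2 : Nat.gcd (ak - x).val M = M / q)
    (h3 : Nat.gcd (a - ak).val M = M / r)
    (h4 : Nat.gcd (aj - x).val M = M / r)
    {a' b b' : ZMod M} (ha' : a' ∈ A) (hb : b ∈ B) (hb' : b' ∈ B)
    (hab : Nat.gcd (x - a').val M = Nat.gcd (b - b').val M) :
    ((r ^ (n + 1) : ℕ) : ZMod M) ∣ x - a' := by
  classical
  by_contra hcon
  have hM0 : 0 < M := NeZero.pos M
  have c1 := (Nat.coprime_primes hp hq).2 hpq
  have c2 := (Nat.coprime_primes hp hr).2 hpr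
  have c3 := (Nat.coprime_primes hq hr).2 hqr
  have dp : p ^ 2 ∣ M := ⟨q ^ (m + 1) * r ^ (n + 1), by rw [hM]; ring⟩
  have dp1 : p ∣ M := (Dvd.intro_left p (by ring : p * p = p ^ 2)).trans dp
  have dq : q ^ (m + 1) ∣ M := ⟨p ^ 2 * r ^ (n + 1), by rw [hM]; ring⟩
  have dr : r ^ (n + 1) ∣ M := ⟨p ^ 2 * q ^ (m + 1), by rw [hM]; ring⟩
  have dr1 : r ∣ M := (dvd_pow_self r (Nat.succ_ne_zero n)).trans dr
  have dq' : q ^ m ∣ M := (pow_dvd_pow q (Nat.le_succ m)).trans dq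
  have dr' : r ^ n ∣ M := (pow_dvd_pow r (Nat.le_succ n)).trans dr
  have dD : p * (q ^ m * r ^ n) ∣ M := ⟨p * q * r, by rw [hM]; ring⟩
  have dE : q ^ m * r ^ n ∣ M := (Dvd.intro_left _ rfl).trans dD
  have hMq : M / q = p ^ 2 * q ^ m * r ^ (n + 1) := by
    apply Nat.div_eq_of_eq_mul_left hq.pos; rw [hM]; ring
  have hMr : M / r = p ^ 2 * q ^ (m + 1) * r ^ n := by
    apply Nat.div_eq_of_eq_mul_left hr.pos; rw [hM]; ring
  have qq : ((q ^ m : ℕ) : ZMod M) ∣ ((q ^ (m + 1) : ℕ) : ZMod M) :=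
    Nat.cast_dvd_cast (pow_dvd_pow q (Nat.le_succ m))
  have rr : ((r ^ n : ℕ) : ZMod M) ∣ ((r ^ (n + 1) : ℕ) : ZMod M) :=
    Nat.cast_dvd_cast (pow_dvd_pow r (Nat.le_succ n))
  have pp : ((p : ℕ) : ZMod M) ∣ ((p ^ 2 : ℕ) : ZMod M) :=
    Nat.cast_dvd_cast (dvd_pow_self p two_ne_zero)
  -- divisibility facts of differences at distance `M / q` and `M / r`
  have factq : ∀ y : ZMod M, Nat.gcd y.val M = M / q → ((p ^ 2 : ℕ) : ZMod M) ∣ y ∧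
      ((r ^ (n + 1) : ℕ) : ZMod M) ∣ y ∧ ((q ^ m : ℕ) : ZMod M) ∣ y ∧
      ¬ ((q ^ (m + 1) : ℕ) : ZMod M) ∣ y := by
    intro y hy
    rw [dvd_iff_gcd dp, dvd_iff_gcd dr, dvd_iff_gcd dq', dvd_iff_gcd dq, hy, hMq]
    refine ⟨⟨q ^ m * r ^ (n + 1), by ring⟩, ⟨p ^ 2 * q ^ m, by ring⟩,
      ⟨p ^ 2 * r ^ (n + 1), by ring⟩, ?_⟩
    intro hd
    have e : p ^ 2 * q ^ m * r ^ (n + 1) = q ^ m * (p ^ 2 * r ^ (n + 1)) := by ring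
    rw [e, pow_succ, mul_dvd_mul_iff_left (pow_pos hq.pos m).ne'] at hd
    have : q.Coprime (p ^ 2 * r ^ (n + 1)) :=
      Nat.Coprime.mul_right (c1.symm.pow_right _) (c3.pow_right _)
    exact hq.one_lt.ne' (Nat.Coprime.eq_one_of_dvd this hd)
  have factr : ∀ y : ZMod M, Nat.gcd y.val M = M / r → ((p ^ 2 : ℕ) : ZMod M) ∣ y ∧
      ((q ^ (m + 1) : ℕ) : ZMod M) ∣ y ∧ ((r ^ n : ℕ) : ZMod M) ∣ y ∧
      ¬ ((r ^ (n + 1) : ℕ) : ZMod M) ∣ y := by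
    intro y hy
    rw [dvd_iff_gcd dp, dvd_iff_gcd dr, dvd_iff_gcd dr', dvd_iff_gcd dq, hy, hMr]
    refine ⟨⟨q ^ (m + 1) * r ^ n, by ring⟩, ⟨p ^ 2 * r ^ n, by ring⟩,
      ⟨p ^ 2 * q ^ (m + 1), by ring⟩, ?_⟩
    intro hd
    have e : p ^ 2 * q ^ (m + 1) * r ^ n = r ^ n * (p ^ 2 * q ^ (m + 1)) := by ring
    rw [e, pow_succ, mul_dvd_mul_iff_left (pow_pos hr.pos n).ne'] at hd
    have : r.Coprime (p ^ 2 * q ^ (m + 1)) :=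
      Nat.Coprime.mul_right (c2.symm.pow_right _) (c3.symm.pow_right _)
    exact hr.one_lt.ne' (Nat.Coprime.eq_one_of_dvd this hd)
  obtain ⟨p1, r1, q1, nq1⟩ := factq _ h1
  obtain ⟨p2, r2, q2, nq2⟩ := factq _ h2
  obtain ⟨p3, q3, r3, nr3⟩ := factr _ h3
  obtain ⟨p4, q4, r4, nr4⟩ := factr _ h4
  have hM' : M = p ^ 2 * r ^ (n + 1) * q ^ (m + 1) := by rw [hM]; ring
  -- points of the saturating set
  have spanr : ∀ {a' b b' : ZMod M}, a' ∈ A → b ∈ B → b' ∈ B →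
      Nat.gcd (x - a').val M = Nat.gcd (b - b').val M →
      ((r ^ (n + 1) : ℕ) : ZMod M) ∣ x - a' ∨ ((r ^ (n + 1) : ℕ) : ZMod M) ∣ aj - a' :=
    fun ha' hb hb' hab => bispan hp hq hr hpq hpr hqr hM h haj p4 q4 r4 ha' hb hb' hab
  have spanq : ∀ {a' b b' : ZMod M}, a' ∈ A → b ∈ B → b' ∈ B →
      Nat.gcd (x - a').val M = Nat.gcd (b - b').val M →
      ((q ^ (m + 1) : ℕ) : ZMod M) ∣ x - a' ∨ ((q ^ (m + 1) : ℕ) : ZMod M) ∣ ak - a' :=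
    fun ha' hb hb' hab => bispan hp hr hq hpr hpq hqr.symm hM' h hak p2 r2 q2 ha' hb hb' hab
  have weakr : ∀ {a' b b' : ZMod M}, a' ∈ A → b ∈ B → b' ∈ B →
      Nat.gcd (x - a').val M = Nat.gcd (b - b').val M → ((r ^ n : ℕ) : ZMod M) ∣ x - a' := by
    intro a' b b' ha' hb hb' hab
    rcases spanr ha' hb hb' hab with h5 | h5
    · exact rr.trans h5
    · have := dvd_sub (rr.trans h5) r4
      rwa [sub_sub_sub_cancel_left] at this
  have weakq : ∀ {a' b b' : ZMod M}, a' ∈ A → b ∈ B → b' ∈ B →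
      Nat.gcd (x - a').val M = Nat.gcd (b - b').val M → ((q ^ m : ℕ) : ZMod M) ∣ x - a' := by
    intro a' b b' ha' hb hb' hab
    rcases spanq ha' hb hb' hab with h5 | h5
    · exact qq.trans h5
    · have := dvd_sub (qq.trans h5) q2
      rwa [sub_sub_sub_cancel_left] at this
  have hgcdM : ∀ y : ZMod M, Nat.gcd y.val M = M → y = 0 := by
    intro y hy
    have : M ∣ y.val := by
      have h0 := Nat.gcd_dvd_left y.val M
      rwa [hy] at h0
    rw [← natCast_dvd_iff' dvd_rfl] at this
    simpa using this
  have cE : p.Coprime (q ^ m * r ^ n) :=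
    Nat.Coprime.mul_right (c1.pow_right _) (c2.pow_right _)
  have cqr : (q ^ m).Coprime (r ^ n) := c3.pow _ _
  -- differences divisible by `D(M)`
  have hdivD : ∀ y : ZMod M, ∀ b ∈ B, ∀ b' ∈ B, Nat.gcd y.val M = Nat.gcd (b - b').val M →
      ((p * (q ^ m * r ^ n) : ℕ) : ZMod M) ∣ y → y = 0 := by
    intro y b hb b' hb' hyb hy
    apply hgcdM
    by_contra hne
    rw [dvd_iff_gcd dD, ← mul_assoc] at hy
    exact hdiv _ hy (Nat.gcd_dvd_right _ _) hne b hb b' hb' hyb.symm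
  have hinj : ∀ b ∈ B, ∀ b' ∈ B, ((p * (q ^ m * r ^ n) : ℕ) : ZMod M) ∣ b - b' → b = b' :=
    fun b hb b' hb' hd => sub_eq_zero.1 (hdivD _ b hb b' hb' rfl hd)
  have hE : ∀ y : ZMod M, ((q ^ m : ℕ) : ZMod M) ∣ y → ((r ^ n : ℕ) : ZMod M) ∣ y →
      ((q ^ m * r ^ n : ℕ) : ZMod M) ∣ y := fun y u v => mul_dvd_of_coprime dE cqr u v
  have hBcard : B.card = p * (q ^ m * r ^ n) := by
    have hpos : 0 < p * q * r := Nat.mul_pos (Nat.mul_pos hp.pos hq.pos) hr.pos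
    have := tile_card h
    rw [hcard] at this
    apply Nat.eq_of_mul_eq_mul_left hpos
    rw [this, hM]; ring
  -- the given point
  have wr := weakr ha' hb hb' hab
  have wq := weakq ha' hb hb' hab
  have npx : ¬ (p : ZMod M) ∣ x - a' := by
    intro hpd
    have := hdivD _ b hb b' hb' hab (mul_dvd_of_coprime dD cE hpd (hE _ wq wr))
    rw [sub_eq_zero] at this
    exact hx (this ▸ ha')
  have raj : ((r ^ (n + 1) : ℕ) : ZMod M) ∣ aj - a' :=
    (spanr ha' hb hb' hab).resolve_left hcon
  have ra : ((r ^ (n + 1) : ℕ) : ZMod M) ∣ a - a' := by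
    have := dvd_add r1 raj
    rwa [sub_add_sub_cancel] at this
  have npaj : ¬ (p : ZMod M) ∣ aj - a' := by
    intro hd
    have := dvd_sub hd (pp.trans p4)
    rw [sub_sub_sub_cancel_left] at this
    exact npx this
  have npa : ¬ (p : ZMod M) ∣ a - a' := by
    intro hd
    have := dvd_sub hd (pp.trans p1)
    rw [sub_sub_sub_cancel_left] at this
    exact npaj this
  have qaj : ((q ^ m : ℕ) : ZMod M) ∣ aj - a' := by
    have := dvd_add (qq.trans q4) wq
    rwa [sub_add_sub_cancel] at this
  have qa : ((q ^ m : ℕ) : ZMod M) ∣ a - a' := by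
    have := dvd_add q1 qaj
    rwa [sub_add_sub_cancel] at this
  have hor : ((q ^ (m + 1) : ℕ) : ZMod M) ∣ aj - a' ∨ ((q ^ (m + 1) : ℕ) : ZMod M) ∣ a - a' := by
    rcases spanq ha' hb hb' hab with h5 | h5
    · left
      have := dvd_add q4 h5
      rwa [sub_add_sub_cancel] at this
    · right
      have := dvd_add q3 h5
      rwa [sub_add_sub_cancel] at this
  have hnand : ¬ (((q ^ (m + 1) : ℕ) : ZMod M) ∣ aj - a' ∧
      ((q ^ (m + 1) : ℕ) : ZMod M) ∣ a - a') := by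
    rintro ⟨u, v⟩
    have := dvd_sub v u
    rw [sub_sub_sub_cancel_right] at this
    exact nq1 this
  -- gcd equality criterion
  have gcdeq : ∀ y z : ZMod M, ¬ (p : ZMod M) ∣ y → ¬ (p : ZMod M) ∣ z →
      ((r ^ (n + 1) : ℕ) : ZMod M) ∣ y → ((r ^ (n + 1) : ℕ) : ZMod M) ∣ z →
      ((q ^ m : ℕ) : ZMod M) ∣ y → ((q ^ m : ℕ) : ZMod M) ∣ z →
      (((q ^ (m + 1) : ℕ) : ZMod M) ∣ y ↔ ((q ^ (m + 1) : ℕ) : ZMod M) ∣ z) →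
      Nat.gcd y.val M = Nat.gcd z.val M := by
    intro y z py pz ry rz qy qz hqyz
    rw [natCast_dvd_iff' dp1] at py pz
    rw [natCast_dvd_iff' dr] at ry rz
    rw [natCast_dvd_iff' dq'] at qy qz
    rw [natCast_dvd_iff' dq, natCast_dvd_iff' dq] at hqyz
    have py' : Nat.gcd y.val (p ^ 2) = 1 := ((hp.coprime_iff_not_dvd.2 py).pow_left 2).symm
    have pz' : Nat.gcd z.val (p ^ 2) = 1 := ((hp.coprime_iff_not_dvd.2 pz).pow_left 2).symm
    rw [gcd_split hM hp hq hr hpq hpr hqr, gcd_split hM hp hq hr hpq hpr hqr, py', pz',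
      Nat.gcd_eq_right ry, Nat.gcd_eq_right rz]
    by_cases hy : q ^ (m + 1) ∣ y.val
    · rw [Nat.gcd_eq_right hy, Nat.gcd_eq_right (hqyz.1 hy)]
    · rw [gcd_prime_pow_succ hq hy, gcd_prime_pow_succ hq (fun hz => hy (hqyz.2 hz)),
        Nat.gcd_eq_right qy, Nat.gcd_eq_right qz]
  -- consequence for `B`
  have Bkey : ∀ g ∈ B, ∀ g' ∈ B, ((q ^ m : ℕ) : ZMod M) ∣ g - g' →
      ((r ^ (n + 1) : ℕ) : ZMod M) ∣ g - g' → g = g' := by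
    intro g hg g' hg' hqg hrg
    by_contra hne
    have npg : ¬ (p : ZMod M) ∣ g - g' := fun hd => hne
      (hinj g hg g' hg' (mul_dvd_of_coprime dD cE hd (hE _ hqg (rr.trans hrg))))
    by_cases hiff : ((q ^ (m + 1) : ℕ) : ZMod M) ∣ aj - a' ↔
        ((q ^ (m + 1) : ℕ) : ZMod M) ∣ g - g'
    · have := sands h haj ha' hg hg' (gcdeq _ _ npaj npg raj hrg qaj hqg hiff)
      subst this
      simp at npaj
    · have hiff' : ((q ^ (m + 1) : ℕ) : ZMod M) ∣ a - a' ↔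
        ((q ^ (m + 1) : ℕ) : ZMod M) ∣ g - g' := by tauto
      have := sands h ha ha' hg hg' (gcdeq _ _ npa npg ra hrg qa hqg hiff')
      subst this
      simp at npa
  -- the set `G` of elements of `B` close to `b`
  let G : Finset (ZMod M) := B.filter (fun g => ((q ^ m * r ^ n : ℕ) : ZMod M) ∣ b - g)
  have hG : ∀ g, g ∈ G ↔ g ∈ B ∧ ((q ^ m * r ^ n : ℕ) : ZMod M) ∣ b - g := by
    intro g; simp [G]
  have Gcard : G.card = p := card_G cE dD hBcard hinj b G hG
  have Gq : ∀ g ∈ G, ((q ^ m : ℕ) : ZMod M) ∣ b - g := fun g hg =>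
    (Nat.cast_dvd_cast (Dvd.intro _ rfl)).trans ((hG g).1 hg).2
  have Gr : ∀ g ∈ G, ((r ^ n : ℕ) : ZMod M) ∣ b - g := fun g hg =>
    (Nat.cast_dvd_cast (Dvd.intro_left _ rfl)).trans ((hG g).1 hg).2
  have : Fact r.Prime := ⟨hr⟩
  let Q : ZMod M → ZMod r := fun y => ((y.val / r ^ n : ℕ) : ZMod r)
  have Qinj : Set.InjOn (fun g => Q (b - g)) (G : Set (ZMod M)) := by
    intro g hg g' hg' hgg
    rw [Finset.mem_coe] at hg hg'
    have e : Q (b - g) = ((1 : ℕ) : ZMod r) * Q (b - g') := by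
      rw [Nat.cast_one, one_mul]; exact hgg
    have e2 := (quot_iff hr.pos dr (Gr g hg) (Gr g' hg') 1).1 e
    rw [Nat.cast_one, one_mul, sub_sub_sub_cancel_left] at e2
    have e3 := dvd_sub (Gq g hg) (Gq g' hg')
    rw [sub_sub_sub_cancel_left] at e3
    exact (Bkey g' ((hG g').1 hg').1 g ((hG g).1 hg).1 e3 e2).symm
  have hex : ∃ d : ZMod r, d ∉ G.image (fun g => Q (b - g)) := by
    by_contra! hall
    have h5 : G.image (fun g => Q (b - g)) = Finset.univ := Finset.eq_univ_iff_forall.2 hall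
    have h6 := Finset.card_image_of_injOn Qinj
    rw [h5, Finset.card_univ, ZMod.card, Gcard] at h6
    exact hpr h6.symm
  obtain ⟨d, hd⟩ := hex
  have hbG : b ∈ G := (hG b).2 ⟨hb, by simp⟩
  have hd0 : d ≠ 0 := by
    rintro rfl
    apply hd
    rw [Finset.mem_image]
    exact ⟨b, hbG, by simp [Q]⟩
  have r4' : ((r ^ n : ℕ) : ZMod M) ∣ x - aj := by rw [← neg_sub]; exact (dvd_neg).2 r4
  have hc0 : Q (x - aj) ≠ 0 := by
    intro h0
    have e : Q (x - aj) = ((0 : ℕ) : ZMod r) * Q (x - aj) := by rw [h0, mul_zero]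
    have e2 := (quot_iff hr.pos dr r4' r4' 0).1 e
    rw [Nat.cast_zero, zero_mul, sub_zero, ← neg_sub, dvd_neg] at e2
    exact nr4 e2
  obtain ⟨u, hu⟩ := ZMod.unitsMap_surjective (n := r) (m := M) dr1
    (Units.mk0 (Q (x - aj) / d) (div_ne_zero hc0 hd0))
  have hu' : (((u : ZMod M).val : ℕ) : ZMod r) = Q (x - aj) / d := by
    have := congrArg Units.val hu
    rw [ZMod.unitsMap_val, Units.val_mk0] at this
    rw [← this, ZMod.natCast_val]
  obtain ⟨a2, ha2, b2, hb2, e2⟩ := tile_surj h (-(u : ZMod M)) (Units.isUnit u).neg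
    (x - u * b)
  have e3 : x - a2 = u * (b - b2) := by linear_combination -e2
  have hab2 : Nat.gcd (x - a2).val M = Nat.gcd (b - b2).val M := by
    rw [e3, gcd_unit_mul _ (Units.isUnit u)]
  have back : ∀ t : ℕ, (t : ZMod M) ∣ x - a2 → (t : ZMod M) ∣ b - b2 := by
    intro t ht
    rw [e3] at ht
    exact (Units.dvd_mul_left).1 ht
  have wr2 := back _ (weakr ha2 hb hb2 hab2)
  have wq2 := back _ (weakq ha2 hb hb2 hab2)
  have hb2G : b2 ∈ G := (hG b2).2 ⟨hb2, hE _ wq2 wr2⟩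
  rcases spanr ha2 hb hb2 hab2 with h5 | h5
  · have := Bkey b hb b2 hb2 wq2 (back _ h5)
    subst this
    rw [sub_self, mul_zero, sub_eq_zero] at e3
    exact hx (e3 ▸ ha2)
  · have e4 : ((r ^ (n + 1) : ℕ) : ZMod M) ∣ (x - aj) - ((u : ZMod M).val : ℕ) * (b - b2) := by
      rw [ZMod.natCast_zmod_val, ← e3, sub_sub_sub_cancel_left, ← neg_sub, dvd_neg]
      exact h5
    have e5 : Q (x - aj) = _ * Q (b - b2) := (quot_iff hr.pos dr r4' wr2 _).2 e4
    rw [hu'] at e5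
    apply hd
    rw [Finset.mem_image]
    refine ⟨b2, hb2G, ?_⟩
    field_simp at e5
    exact e5.symm

/-- **Flat corner.** Let `M = p_i² p_j^{n_j} p_k^{n_k}`, `A ⊕ B = ℤ_M`,
`|A| = p_i p_j p_k`, and assume no divisor `m` of `M` with `D(M) | m`, `m ≠ M` lies in
`Div(B)`. If `x ∉ A` and `a, a_j, a_k ∈ A` form a flat corner configuration around `x`, then
for every `b ∈ B` the set `A_{x,b}` lies on the line `ℓ_i(x)`, and consequently the
saturating set `A_x` lies on `ℓ_i(x)`. -/
theorem statement8
    (pi pj pk : ℕ) (hpi : pi.Prime) (hpj : pj.Prime) (hpk : pk.Prime)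
    (hij : pi ≠ pj) (hik : pi ≠ pk) (hjk : pj ≠ pk)
    (nj nk : ℕ) (hnj : 1 ≤ nj) (hnk : 1 ≤ nk)
    (M : ℕ) (hM : M = pi ^ 2 * pj ^ nj * pk ^ nk)
    (A B : Finset (ZMod M))
    (htile : IsTiling M (A : Set (ZMod M)) (B : Set (ZMod M)))
    (hcardA : A.card = pi * pj * pk)
    (hdiv : ∀ m : ℕ, (pi * pj ^ (nj - 1) * pk ^ (nk - 1)) ∣ m → m ∣ M → m ≠ M →
      m ∉ DivSet M M (B : Set (ZMod M)))
    (x : ZMod M) (hx : x ∉ A)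
    (a aj ak : ZMod M) (ha : a ∈ A) (haj : aj ∈ A) (hak : ak ∈ A)
    (h1 : Nat.gcd (a - aj).val M = M / pj)
    (h2 : Nat.gcd (ak - x).val M = M / pj)
    (h3 : Nat.gcd (a - ak).val M = M / pk)
    (h4 : Nat.gcd (aj - x).val M = M / pk) :
    (∀ b ∈ B,
      {a' : ZMod M | a' ∈ A ∧ ∃ b' ∈ B, Nat.gcd (x - a').val M = Nat.gcd (b - b').val M}
        ⊆ gridSet M x (M / pi ^ 2)) ∧
    {a' : ZMod M | a' ∈ A ∧ Nat.gcd (x - a').val M ∈ DivSet M M (B : Set (ZMod M))}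
      ⊆ gridSet M x (M / pi ^ 2) := by
  obtain ⟨m, rfl⟩ : ∃ m, nj = m + 1 := ⟨nj - 1, by omega⟩
  obtain ⟨n, rfl⟩ : ∃ n, nk = n + 1 := ⟨nk - 1, by omega⟩
  simp only [Nat.add_sub_cancel] at hdiv
  have hMpos : 0 < M := by
    rw [hM]
    exact Nat.mul_pos (Nat.mul_pos (pow_pos hpi.pos _) (pow_pos hpj.pos _)) (pow_pos hpk.pos _)
  have : NeZero M := ⟨hMpos.ne'⟩
  have ht : ∀ z : ZMod M, ∃! ab : ZMod M × ZMod M, ab.1 ∈ A ∧ ab.2 ∈ B ∧ ab.1 + ab.2 = z := by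
    simpa [IsTiling] using htile
  have hd1 : ∀ t : ℕ, (pi * pj ^ m * pk ^ n) ∣ t → t ∣ M → t ≠ M →
      ∀ b ∈ B, ∀ b' ∈ B, Nat.gcd (b - b').val M ≠ t :=
    fun t h5 h6 h7 b hb b' hb' he => hdiv t h5 h6 h7 ⟨b, hb, b', hb', he⟩
  have main : ∀ a' ∈ A, ∀ b ∈ B, ∀ b' ∈ B,
      Nat.gcd (x - a').val M = Nat.gcd (b - b').val M → a' ∈ gridSet M x (M / pi ^ 2) := by
    intro a' ha' b hb b' hb' hab
    have k1 := key_lemma hpi hpj hpk hij hik hjk hM ht hcardA hd1 hx ha haj hak h1 h2 h3 h4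
      ha' hb hb' hab
    have k2 := key_lemma (m := n) (n := m) hpi hpk hpj hik hij hjk.symm
      (by rw [hM]; ring) ht (by rw [hcardA]; ring)
      (fun t h5 => hd1 t (by rwa [mul_right_comm])) hx ha hak haj h3 h4 h1 h2
      ha' hb hb' hab
    have e : M / pi ^ 2 = pj ^ (m + 1) * pk ^ (n + 1) := by
      apply Nat.div_eq_of_eq_mul_left (pow_pos hpi.pos 2)
      rw [hM]; ring
    change ((M / pi ^ 2 : ℕ) : ZMod M) ∣ a' - x
    rw [e, ← neg_sub, dvd_neg]
    refine mul_dvd_of_coprime ⟨pi ^ 2, by rw [hM]; ring⟩ ?_ k2 k1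
    exact ((Nat.coprime_primes hpj hpk).2 hjk).pow _ _
  refine ⟨?_, ?_⟩
  · rintro b hb a' ⟨ha', b', hb', hab⟩
    exact main a' ha' b hb b' hb' hab
  · rintro a' ⟨ha', b, hb, b', hb', hab⟩
    exact main a' ha' b hb b' hb' hab.symm
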